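/- Let k ≥ 1 and let g : ℂ^k → ℂ^k be complex-analytic on all of ℂ^k such that the Jacobian determinant z ↦ det(Dg(z)) is not identically zero. For n ≥ 1 and x ∈ ℂ^k set μ_n(x) := k + ord_x(det D(g^n)), where g^n is the n-fold iterate of g. Then for all integers n, m ≥ 1 and every x ∈ ℂ^k, μ_{n+m}(x) ≤ μ_n(x) · μ_m(g^n(x)). -/

import Mathlib

/-- The order of vanishing of a function at a point: the smallest `n ∈ ℕ` such that the
`n`-th iterated Fréchet derivative of `f` at `p` is nonzero, as an element of `ℕ∞`
(so it is `⊤` when all iterated derivatives vanish). -/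
noncomputable def ordAt {E F : Type*} [NormedAddCommGroup E] [NormedSpace ℂ E]
    [NormedAddCommGroup F] [NormedSpace ℂ F] (f : E → F) (p : E) : ℕ∞ :=
  sInf ((fun n : ℕ => (n : ℕ∞)) '' {n : ℕ | iteratedFDeriv ℂ n f p ≠ 0})

/-- The Jacobian cocycle of an entire self-map `g` of `ℂ^k`:
`μ_n(x) := k + ord_x(det D(g^[n]))`, valued in `ℕ∞`. -/
noncomputable def jacCocycle (k : ℕ) (g : (Fin k → ℂ) → (Fin k → ℂ)) (n : ℕ)
    (x : Fin k → ℂ) : ℕ∞ :=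
  (k : ℕ∞) + ordAt (fun z => (fderiv ℂ (g^[n]) z).det) x

open scoped ContDiff Matrix Topology

/-!
Near `x`, `det D(f ∘ g) = (det Df ∘ g) · det Dg`, so everything rests on the chain inequality
`ord_x (φ ∘ g) ≤ (1 + ord_x (det Dg)) · ord_{g x} φ`, proved by induction on the order of `φ`.
Choose a direction `w` for which `∂_w φ` has order one less than `φ` at `g x`. By Cramer's rule
there is an analytic vector field `A` with `Dg · A = (det Dg) w`, hence
`D(φ ∘ g) · A = det Dg · (∂_w φ ∘ g)`, and differentiating `φ ∘ g` lowers its order by at most one.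
The order of a product is at most the sum of the orders: two nonzero homogeneous polynomials are
simultaneously nonzero in some direction, and along that line the orders in one variable add up.

With `a = ord (det Dg)` and `b = ord (det Df)` this yields
`ord (det D(f ∘ g)) ≤ (1 + a) b + a`, that is `1 + ord (det D(f ∘ g)) ≤ (1 + a) (1 + b)`; the
constant `1` may then be replaced by any larger one, in particular by the dimension.
-/

section IteratedFDeriv

variable {𝕜 E F G : Type*} [NontriviallyNormedField 𝕜] [NormedAddCommGroup E] [NormedSpace 𝕜 E]
  [NormedAddCommGroup F] [NormedSpace 𝕜 F] [NormedAddCommGroup G] [NormedSpace 𝕜 G]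

theorem analyticAt_comp_line {f : E → F} {p : E} (hf : AnalyticAt 𝕜 f p) (v : E) :
    AnalyticAt 𝕜 (fun t : 𝕜 => f (p + t • v)) 0 :=
  AnalyticAt.fun_comp (by simpa using hf) (by fun_prop)

variable [CompleteSpace F]

theorem analyticAt_fderiv_apply {f : E → F} {p : E} (hf : AnalyticAt 𝕜 f p) (w : E) :
    AnalyticAt 𝕜 (fun z => fderiv 𝕜 f z w) p :=
  ((ContinuousLinearMap.apply 𝕜 F w).analyticAt _).fun_comp hf.fderiv

theorem iteratedDeriv_comp_line_eq_iteratedFDeriv {f : E → F} {p : E} (hf : AnalyticAt 𝕜 f p)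
    (v : E) (n : ℕ) :
    iteratedDeriv n (fun t : 𝕜 => f (p + t • v)) 0 = iteratedFDeriv 𝕜 n f p fun _ => v := by
  obtain ⟨P, r, hP⟩ := hf
  have hline : HasFPowerSeriesOnBall (fun z => f (p + z)) P
      (ContinuousLinearMap.toSpanSingleton 𝕜 v 0) r := by
    simpa [add_comm] using hP.comp_sub (-p)
  rw [iteratedDeriv_eq_iteratedFDeriv, ← hP.factorial_smul]
  convert! (hline.compContinuousLinearMap.factorial_smul 1 n).symm using 2
  simp only [FormalMultilinearSeries.compContinuousLinearMap_apply, Function.comp_def,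
    ContinuousLinearMap.toSpanSingleton_apply, one_smul]

theorem exists_iteratedFDeriv_apply_diagonal_ne_zero [CharZero 𝕜] {f : E → F} {p : E}
    (hf : AnalyticAt 𝕜 f p) {n : ℕ} (hn : iteratedFDeriv 𝕜 n f p ≠ 0) :
    ∃ v, iteratedFDeriv 𝕜 n f p (fun _ => v) ≠ 0 := by
  contrapose! hn with hdiag
  ext v
  have polarization := (iteratedFDeriv 𝕜 n f p).iteratedFDeriv_comp_diagonal 0 v
  have symmetric (σ : Equiv.Perm (Fin n)) :
      iteratedFDeriv 𝕜 n f p (fun i => v (σ i)) = iteratedFDeriv 𝕜 n f p v :=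
    hf.contDiffAt.iteratedFDeriv_comp_perm v σ
  simp only [hdiag, symmetric, iteratedFDeriv_fun_zero, Finset.sum_const, Finset.card_univ,
    Fintype.card_perm, Fintype.card_fin, ← Nat.cast_smul_eq_nsmul 𝕜] at polarization
  simpa [Nat.factorial_ne_zero] using polarization.symm

theorem exists_iteratedFDeriv_fderiv_apply_ne_zero {f : E → F} {p : E} (hf : AnalyticAt 𝕜 f p)
    {n : ℕ} (hn : iteratedFDeriv 𝕜 (n + 1) f p ≠ 0) :
    ∃ w, iteratedFDeriv 𝕜 n (fun z => fderiv 𝕜 f z w) p ≠ 0 := by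
  contrapose! hn with hdir
  ext v
  have happly := (ContinuousLinearMap.apply 𝕜 F (v (Fin.last n))).iteratedFDeriv_comp_left
    (hf.fderiv.contDiffAt (n := ω)) (i := n) le_top
  rw [iteratedFDeriv_succ_apply_right]
  simpa using DFunLike.congr_fun (happly.symm.trans (hdir _)) (Fin.init v)

theorem norm_iteratedFDeriv_clm_apply_of_analyticAt [CompleteSpace G] {L : E → F →L[𝕜] G}
    {A : E → F} {p : E} (hL : AnalyticAt 𝕜 L p) (hA : AnalyticAt 𝕜 A p) (n : ℕ) :
    ‖iteratedFDeriv 𝕜 n (fun z => L z (A z)) p‖ ≤ ∑ i ∈ Finset.range (n + 1),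
      n.choose i * ‖iteratedFDeriv 𝕜 i L p‖ * ‖iteratedFDeriv 𝕜 (n - i) A p‖ := by
  let s : Set E := {z | AnalyticAt 𝕜 L z} ∩ {z | AnalyticAt 𝕜 A z}
  have hs : IsOpen s := (isOpen_analyticAt 𝕜 L).inter (isOpen_analyticAt 𝕜 A)
  have hp : p ∈ s := ⟨hL, hA⟩
  have hLs : ContDiffOn 𝕜 ω L s := fun z hz => hz.1.contDiffAt.contDiffWithinAt
  have hAs : ContDiffOn 𝕜 ω A s := fun z hz => hz.2.contDiffAt.contDiffWithinAt
  simpa only [iteratedFDerivWithin_of_isOpen _ hs hp] using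
    norm_iteratedFDerivWithin_clm_apply hLs hAs hs.uniqueDiffOn hp (n := n) le_top

end IteratedFDeriv

section Determinant

variable {𝕜 E V : Type*} [NontriviallyNormedField 𝕜] [NormedAddCommGroup E] [NormedSpace 𝕜 E]
  {p : E}

theorem analyticAt_matrix_det {ι : Type*} [Fintype ι] [DecidableEq ι] {M : E → Matrix ι ι 𝕜}
    (hM : ∀ i j, AnalyticAt 𝕜 (fun z => M z i j) p) : AnalyticAt 𝕜 (fun z => (M z).det) p := by
  simp only [Matrix.det_apply']
  exact Finset.analyticAt_fun_sum _ fun σ _ =>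
    analyticAt_const.mul (Finset.analyticAt_fun_prod _ fun i _ => hM _ _)

variable [CompleteSpace 𝕜] [NormedAddCommGroup V] [NormedSpace 𝕜 V] [FiniteDimensional 𝕜 V]
  {L : E → V →L[𝕜] V}

theorem analyticAt_toMatrix_apply {ι : Type*} [Fintype ι] [DecidableEq ι]
    (b : Module.Basis ι 𝕜 V) (hL : AnalyticAt 𝕜 L p) (i j : ι) :
    AnalyticAt 𝕜 (fun z => LinearMap.toMatrix b b (L z : V →ₗ[𝕜] V) i j) p := by
  let entry : (V →L[𝕜] V) →L[𝕜] 𝕜 :=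
    (b.coord i).toContinuousLinearMap ∘L ContinuousLinearMap.apply 𝕜 V (b j)
  simpa [LinearMap.toMatrix_apply, Function.comp_def, entry] using
    (entry.analyticAt (L p)).comp hL

theorem analyticAt_clm_det (hL : AnalyticAt 𝕜 L p) : AnalyticAt 𝕜 (fun z => (L z).det) p := by
  simp only [ContinuousLinearMap.det, ← LinearMap.det_toMatrix (Module.finBasis 𝕜 V)]
  exact analyticAt_matrix_det (analyticAt_toMatrix_apply _ hL)

theorem exists_analyticAt_clm_apply_eq_det_smul (hL : AnalyticAt 𝕜 L p) (w : V) :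
    ∃ A : E → V, AnalyticAt 𝕜 A p ∧ ∀ z, L z (A z) = (L z).det • w := by
  let b := Module.finBasis 𝕜 V
  let M (z : E) := LinearMap.toMatrix b b (L z : V →ₗ[𝕜] V)
  let A (z : E) : V := b.equivFun.symm ((M z).cramer (b.repr w))
  have hcramer (i) : AnalyticAt 𝕜 (fun z => (M z).cramer (b.repr w) i) p := by
    simp only [Matrix.cramer_apply]
    refine analyticAt_matrix_det fun j l => ?_
    simp only [Matrix.updateCol_apply]
    split_ifs
    · exact analyticAt_const
    · exact analyticAt_toMatrix_apply b hL j l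
  refine ⟨A, ?_, fun z => b.equivFun.injective ?_⟩
  · exact (b.equivFun.symm.toContinuousLinearEquiv.toContinuousLinearMap.analyticAt _).comp
      (AnalyticAt.pi hcramer)
  · calc b.equivFun (L z (A z))
        = M z *ᵥ b.repr (A z) := (LinearMap.toMatrix_mulVec_repr b b _ _).symm
      _ = M z *ᵥ (M z).cramer (b.repr w) := by
          rw [← b.equivFun_apply, LinearEquiv.apply_symm_apply]
      _ = (M z).det • b.repr w := Matrix.mulVec_cramer _ _
      _ = b.equivFun ((L z).det • w) := by
          rw [LinearMap.det_toMatrix, map_smul, b.equivFun_apply, ContinuousLinearMap.det]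

end Determinant

theorem exists_ne_zero_and_ne_zero_of_analyticOnNhd {𝕜 E F G : Type*} [RCLike 𝕜]
    [NormedAddCommGroup E] [NormedSpace 𝕜 E] [NormedAddCommGroup F]
    [NormedAddCommGroup G] [NormedSpace 𝕜 G] {P : E → F} {Q : E → G} (hP : Continuous P)
    (hQ : AnalyticOnNhd 𝕜 Q Set.univ) (hP0 : ∃ v, P v ≠ 0) (hQ0 : ∃ v, Q v ≠ 0) :
    ∃ v, P v ≠ 0 ∧ Q v ≠ 0 := by
  obtain ⟨v, hv⟩ := hP0
  contrapose! hQ0 with hPQ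
  have hQv : Q =ᶠ[𝓝 v] 0 := (hP.continuousAt.eventually_ne hv).mono hPQ
  let _ := NormedSpace.restrictScalars ℝ 𝕜 E
  exact fun w => hQ.eqOn_zero_of_preconnected_of_eventuallyEq_zero isPreconnected_univ
    (Set.mem_univ v) hQv (Set.mem_univ w)

section OrdAt

variable {E F : Type*} [NormedAddCommGroup E] [NormedSpace ℂ E] [NormedAddCommGroup F]
  [NormedSpace ℂ F] {f : E → F} {p : E}

theorem le_ordAt_iff {d : ℕ∞} :
    d ≤ ordAt f p ↔ ∀ n : ℕ, n < d → iteratedFDeriv ℂ n f p = 0 := by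
  simp only [ordAt, le_sInf_iff, Set.forall_mem_image, Set.mem_ofPred_eq]
  exact forall_congr' fun n => by rw [← not_imp_not, not_le, not_not]

theorem ordAt_le_of_iteratedFDeriv_ne_zero {n : ℕ} (hn : iteratedFDeriv ℂ n f p ≠ 0) :
    ordAt f p ≤ n :=
  sInf_le ⟨n, hn, rfl⟩

theorem iteratedFDeriv_ne_zero_of_ordAt_eq {n : ℕ} (hn : ordAt f p = n) :
    iteratedFDeriv ℂ n f p ≠ 0 := by
  intro hzero
  have hle : ((n + 1 : ℕ) : ℕ∞) ≤ ordAt f p := le_ordAt_iff.2 fun i hi => by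
    rcases (Nat.lt_succ_iff.1 (Nat.cast_lt.1 hi)).eq_or_lt with rfl | hlt
    · exact hzero
    · exact le_ordAt_iff.1 hn.ge i (Nat.cast_lt.2 hlt)
  rw [hn, Nat.cast_le] at hle
  omega

theorem ordAt_congr {g : E → F} (h : f =ᶠ[𝓝 p] g) : ordAt f p = ordAt g p := by
  simp only [ordAt, fun n => (h.iteratedFDeriv ℂ n).eq_of_nhds]

theorem ordAt_le_ordAt_fderiv_add_one (f : E → F) (p : E) :
    ordAt f p ≤ ordAt (fderiv ℂ f) p + 1 := by
  cases h : ordAt (fderiv ℂ f) p with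
  | top => simp
  | coe n =>
    refine ordAt_le_of_iteratedFDeriv_ne_zero (n := n + 1) ?_
    rw [← norm_ne_zero_iff, ← norm_iteratedFDeriv_fderiv, norm_ne_zero_iff]
    exact iteratedFDeriv_ne_zero_of_ordAt_eq h

variable {G : Type*} [NormedAddCommGroup G] [NormedSpace ℂ G] [CompleteSpace F]

theorem ordAt_le_ordAt_clm_apply [CompleteSpace G] {L : E → F →L[ℂ] G} {A : E → F}
    (hL : AnalyticAt ℂ L p) (hA : AnalyticAt ℂ A p) :
    ordAt L p ≤ ordAt (fun z => L z (A z)) p := by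
  refine le_ordAt_iff.2 fun n hn => norm_le_zero_iff.1 ?_
  refine (norm_iteratedFDeriv_clm_apply_of_analyticAt hL hA n).trans_eq ?_
  refine Finset.sum_eq_zero fun i hi => ?_
  have hin : (i : ℕ∞) ≤ n := Nat.cast_le.2 (Finset.mem_range_succ_iff.1 hi)
  rw [le_ordAt_iff.1 le_rfl i (hin.trans_lt hn), norm_zero, mul_zero, zero_mul]

theorem ordAt_le_analyticOrderAt_comp_line (hf : AnalyticAt ℂ f p) (v : E) :
    ordAt f p ≤ analyticOrderAt (fun t : ℂ => f (p + t • v)) 0 := by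
  refine ENat.forall_natCast_le_iff_le.1 fun n hn => ?_
  rw [natCast_le_analyticOrderAt_iff_iteratedDeriv_eq_zero (analyticAt_comp_line hf v)]
  intro i hi
  rw [iteratedDeriv_comp_line_eq_iteratedFDeriv hf,
    le_ordAt_iff.1 hn i (Nat.cast_lt.2 hi), zero_apply]

theorem analyticOrderAt_comp_line_le (hf : AnalyticAt ℂ f p) {v : E} {n : ℕ}
    (hv : iteratedFDeriv ℂ n f p (fun _ => v) ≠ 0) :
    analyticOrderAt (fun t : ℂ => f (p + t • v)) 0 ≤ n := by
  contrapose! hv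
  have hle := Order.add_one_le_of_lt hv
  rw [← Nat.cast_add_one,
    natCast_le_analyticOrderAt_iff_iteratedDeriv_eq_zero (analyticAt_comp_line hf v)] at hle
  rw [← iteratedDeriv_comp_line_eq_iteratedFDeriv hf, hle n n.lt_succ_self]

theorem ordAt_smul_le {h : E → ℂ} (hh : AnalyticAt ℂ h p) (hf : AnalyticAt ℂ f p) :
    ordAt (fun z => h z • f z) p ≤ ordAt h p + ordAt f p := by
  cases ha : ordAt h p with
  | top => simp
  | coe a =>
  cases hb : ordAt f p with
  | top => simp
  | coe b =>
  obtain ⟨v, hva, hvb⟩ := exists_ne_zero_and_ne_zero_of_analyticOnNhd (𝕜 := ℂ)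
    (P := fun v => iteratedFDeriv ℂ a h p fun _ => v)
    (Q := fun v => iteratedFDeriv ℂ b f p fun _ => v) (by fun_prop)
    (fun v _ => (iteratedFDeriv ℂ b f p).analyticAt.fun_comp (.pi fun _ => analyticAt_id))
    (exists_iteratedFDeriv_apply_diagonal_ne_zero hh (iteratedFDeriv_ne_zero_of_ordAt_eq ha))
    (exists_iteratedFDeriv_apply_diagonal_ne_zero hf (iteratedFDeriv_ne_zero_of_ordAt_eq hb))
  calc ordAt (fun z => h z • f z) p
      ≤ analyticOrderAt ((fun t : ℂ => h (p + t • v)) • fun t : ℂ => f (p + t • v)) 0 :=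
        ordAt_le_analyticOrderAt_comp_line (hh.smul hf) v
    _ = analyticOrderAt (fun t : ℂ => h (p + t • v)) 0
          + analyticOrderAt (fun t : ℂ => f (p + t • v)) 0 :=
        analyticOrderAt_smul (analyticAt_comp_line hh v) (analyticAt_comp_line hf v)
    _ ≤ a + b :=
        add_le_add (analyticOrderAt_comp_line_le hh hva) (analyticOrderAt_comp_line_le hf hvb)

end OrdAt

/-- The Jacobian determinant `det Dg` of a self-map `g`, as a function of the base point. As for
`fderiv`, its value is junk where `g` is not differentiable. -/
noncomputable def jacobianDet {E : Type*} [NormedAddCommGroup E] [NormedSpace ℂ E] (g : E → E)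
    (z : E) : ℂ :=
  (fderiv ℂ g z).det

section JacobianDet

variable {E F : Type*} [NormedAddCommGroup E] [NormedSpace ℂ E] [FiniteDimensional ℂ E]
  [NormedAddCommGroup F] [NormedSpace ℂ F] [CompleteSpace F] {f g : E → E} {φ : E → F} {x : E}

theorem analyticAt_jacobianDet (hg : AnalyticAt ℂ g x) : AnalyticAt ℂ (jacobianDet g) x :=
  have := FiniteDimensional.complete ℂ E
  analyticAt_clm_det hg.fderiv

theorem jacobianDet_comp_eventuallyEq (hf : AnalyticAt ℂ f (g x)) (hg : AnalyticAt ℂ g x) :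
    jacobianDet (f ∘ g) =ᶠ[𝓝 x] fun z => jacobianDet g z • (jacobianDet f ∘ g) z := by
  have := FiniteDimensional.complete ℂ E
  filter_upwards [hg.eventually_analyticAt,
    hg.continuousAt.eventually hf.eventually_analyticAt] with z hgz hfz
  rw [jacobianDet, fderiv_comp z hfz.differentiableAt hgz.differentiableAt, smul_eq_mul, mul_comm]
  exact LinearMap.det_comp _ _

theorem exists_fderiv_comp_apply_eventuallyEq_jacobianDet_smul (hφ : AnalyticAt ℂ φ (g x))
    (hg : AnalyticAt ℂ g x) (w : E) :
    ∃ A : E → E, AnalyticAt ℂ A x ∧ (fun z => fderiv ℂ (φ ∘ g) z (A z)) =ᶠ[𝓝 x]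
      fun z => jacobianDet g z • fderiv ℂ φ (g z) w := by
  have := FiniteDimensional.complete ℂ E
  obtain ⟨A, hA, hgA⟩ := exists_analyticAt_clm_apply_eq_det_smul hg.fderiv w
  refine ⟨A, hA, ?_⟩
  filter_upwards [hg.eventually_analyticAt,
    hg.continuousAt.eventually hφ.eventually_analyticAt] with z hgz hφz
  rw [fderiv_comp z hφz.differentiableAt hgz.differentiableAt, ContinuousLinearMap.comp_apply,
    hgA, map_smul, jacobianDet]

theorem ordAt_comp_le_ordAt_jacobianDet_add (hφ : AnalyticAt ℂ φ (g x)) (hg : AnalyticAt ℂ g x)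
    (w : E) :
    ordAt (φ ∘ g) x ≤
      ordAt (jacobianDet g) x + ordAt (fun z => fderiv ℂ φ (g z) w) x + 1 := by
  have := FiniteDimensional.complete ℂ E
  obtain ⟨A, hA, hφA⟩ := exists_fderiv_comp_apply_eventuallyEq_jacobianDet_smul hφ hg w
  calc ordAt (φ ∘ g) x
      ≤ ordAt (fderiv ℂ (φ ∘ g)) x + 1 := ordAt_le_ordAt_fderiv_add_one _ _
    _ ≤ ordAt (fun z => fderiv ℂ (φ ∘ g) z (A z)) x + 1 := by
        gcongr
        exact ordAt_le_ordAt_clm_apply (hφ.comp hg).fderiv hA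
    _ = ordAt (fun z => jacobianDet g z • fderiv ℂ φ (g z) w) x + 1 := by
        rw [ordAt_congr hφA]
    _ ≤ ordAt (jacobianDet g) x + ordAt (fun z => fderiv ℂ φ (g z) w) x + 1 := by
        gcongr
        exact ordAt_smul_le (analyticAt_jacobianDet hg) ((analyticAt_fderiv_apply hφ w).fun_comp hg)

theorem ordAt_comp_le_of_iteratedFDeriv_ne_zero (hφ : AnalyticAt ℂ φ (g x))
    (hg : AnalyticAt ℂ g x) {b : ℕ} (hb : iteratedFDeriv ℂ b φ (g x) ≠ 0) :
    ordAt (φ ∘ g) x ≤ (1 + ordAt (jacobianDet g) x) * b := by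
  induction b generalizing φ with
  | zero =>
    have hcomp : iteratedFDeriv ℂ 0 (φ ∘ g) x ≠ 0 := by
      rwa [← norm_ne_zero_iff, norm_iteratedFDeriv_zero] at hb ⊢
    simpa using ordAt_le_of_iteratedFDeriv_ne_zero hcomp
  | succ b ih =>
    obtain ⟨w, hw⟩ := exists_iteratedFDeriv_fderiv_apply_ne_zero hφ hb
    calc ordAt (φ ∘ g) x
        ≤ ordAt (jacobianDet g) x + ordAt (fun z => fderiv ℂ φ (g z) w) x + 1 :=
          ordAt_comp_le_ordAt_jacobianDet_add hφ hg w
      _ ≤ ordAt (jacobianDet g) x + (1 + ordAt (jacobianDet g) x) * b + 1 := by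
          gcongr
          exact ih (analyticAt_fderiv_apply hφ w) hw
      _ = (1 + ordAt (jacobianDet g) x) * (b + 1 : ℕ) := by push_cast; ring

theorem ordAt_comp_le (hφ : AnalyticAt ℂ φ (g x)) (hg : AnalyticAt ℂ g x) :
    ordAt (φ ∘ g) x ≤ (1 + ordAt (jacobianDet g) x) * ordAt φ (g x) := by
  cases hb : ordAt φ (g x) with
  | top => simp [ENat.mul_top]
  | coe b =>
    exact ordAt_comp_le_of_iteratedFDeriv_ne_zero hφ hg (iteratedFDeriv_ne_zero_of_ordAt_eq hb)

theorem one_add_ordAt_jacobianDet_comp_le (hf : AnalyticAt ℂ f (g x)) (hg : AnalyticAt ℂ g x) :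
    1 + ordAt (jacobianDet (f ∘ g)) x ≤
      (1 + ordAt (jacobianDet g) x) * (1 + ordAt (jacobianDet f) (g x)) := by
  have hJf := analyticAt_jacobianDet hf
  have hJg := analyticAt_jacobianDet hg
  calc 1 + ordAt (jacobianDet (f ∘ g)) x
      = 1 + ordAt (fun z => jacobianDet g z • (jacobianDet f ∘ g) z) x := by
        rw [ordAt_congr (jacobianDet_comp_eventuallyEq hf hg)]
    _ ≤ 1 + (ordAt (jacobianDet g) x + ordAt (jacobianDet f ∘ g) x) := by
        gcongr
        exact ordAt_smul_le hJg (hJf.comp hg)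
    _ ≤ 1 + (ordAt (jacobianDet g) x +
          (1 + ordAt (jacobianDet g) x) * ordAt (jacobianDet f) (g x)) := by
        gcongr
        exact ordAt_comp_le hJf hg
    _ = (1 + ordAt (jacobianDet g) x) * (1 + ordAt (jacobianDet f) (g x)) := by ring

end JacobianDet

theorem add_le_add_mul_add_of_one_add_le {R : Type*} [CommSemiring R] [PartialOrder R]
    [IsOrderedAddMonoid R] [CanonicallyOrderedAdd R] {a b c d : R}
    (h : 1 + d ≤ (1 + a) * (1 + b)) (hc : 1 ≤ c) : c + d ≤ (c + a) * (c + b) := by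
  obtain ⟨e, rfl⟩ := exists_add_of_le hc
  calc 1 + e + d = (1 + d) + e := by ring
    _ ≤ (1 + a) * (1 + b) + e := by gcongr
    _ ≤ (1 + a) * (1 + b) + e + e * (1 + a + b + e) := le_self_add
    _ = (1 + e + a) * (1 + e + b) := by ring

theorem analyticAt_iterate {𝕜 E : Type*} [NontriviallyNormedField 𝕜] [NormedAddCommGroup E]
    [NormedSpace 𝕜 E] {g : E → E} {x : E} {n : ℕ} (hg : ∀ i < n, AnalyticAt 𝕜 g (g^[i] x)) :
    AnalyticAt 𝕜 g^[n] x := by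
  induction n with
  | zero => exact analyticAt_id
  | succ n ih =>
    rw [Function.iterate_succ']
    exact (hg n n.lt_succ_self).comp (ih fun i hi => hg i (hi.trans n.lt_succ_self))

theorem jacobian_cocycle_submultiplicative_general {E : Type*} [NormedAddCommGroup E]
    [NormedSpace ℂ E] [FiniteDimensional ℂ E] {f g : E → E} {x : E}
    (hf : AnalyticAt ℂ f (g x)) (hg : AnalyticAt ℂ g x) {c : ℕ∞} (hc : 1 ≤ c) :
    c + ordAt (jacobianDet (f ∘ g)) x ≤
      (c + ordAt (jacobianDet g) x) * (c + ordAt (jacobianDet f) (g x)) :=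
  add_le_add_mul_add_of_one_add_le (one_add_ordAt_jacobianDet_comp_le hf hg) hc

/-- Proposition 4.1 (ii), smooth case `X = ℂ^k` with `C_X = 1`:
submultiplicativity of the Jacobian cocycle: for `g : ℂ^k → ℂ^k` entire with Jacobian
determinant not identically zero, `μ_{n+m}(x) ≤ μ_n(x) · μ_m(g^n(x))` for all
`n, m ≥ 1` and all `x`. -/
theorem jacobian_cocycle_submultiplicative
    (k : ℕ) (hk : 1 ≤ k) (g : (Fin k → ℂ) → (Fin k → ℂ))
    (hg : ∀ z, AnalyticAt ℂ g z)
    (hJ : ∃ z, (fderiv ℂ g z).det ≠ 0)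
    (n m : ℕ) (hn : 1 ≤ n) (hm : 1 ≤ m) (x : Fin k → ℂ) :
    jacCocycle k g (n + m) x ≤ jacCocycle k g n x * jacCocycle k g m (g^[n] x) := by
  have hiter (l : ℕ) (y : Fin k → ℂ) : AnalyticAt ℂ g^[l] y := analyticAt_iterate fun _ _ => hg _
  rw [Nat.add_comm n m]
  simpa only [jacCocycle, Function.iterate_add] using!
    jacobian_cocycle_submultiplicative_general (hiter m _) (hiter n x) (Nat.one_le_cast.2 hk)
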